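/- For every y > 0: Z(y) − (q/Φ) W(y) − ∫_{(0,∞)} [ W(y)·(1 − e^{−Φu})/Φ − ∫_0^{min(u,y)} W(y−w) dw ] Π(du) = (σ²/2) ( W'(y) − Φ W(y) ). -/

import Mathlib

/-!
Let `f(y) = ∫_0^y W` and let `𝓛` be the generator of the process with Laplace exponent `ψ`. The
identity reduces to `(𝓛 − q)f = 1` on `(0, ∞)`, an equation in which `Φ` does not occur: subtracting
`W(y)/Φ` times `ψ(Φ) = q` recovers the stated form.

The equation is checked on Laplace transforms. For a fixed jump size the jump integrand keeps one
sign as `y` varies, so Fubini applies to the jump part, and the transform of `1 − (𝓛 − q)f` comes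
out as the constant `(σ²/2) W(0)`. Laplace transforms vanish at infinity, so this constant is zero;
by uniqueness and continuity `1 − (𝓛 − q)f` vanishes too. Uniqueness comes from analytic
continuation of moment generating functions.
-/

open MeasureTheory Real Set Filter

/-- Laplace exponent `ψ(β) = cβ + (σ²/2)β² + ∫_{(0,∞)} (e^{−βz} − 1 + βz 1_{(0,1)}(z)) ν(dz)`. -/
noncomputable def laplaceExponent (c σ : ℝ) (ν : Measure ℝ) (β : ℝ) : ℝ :=
  c * β + σ ^ 2 / 2 * β ^ 2 +
    ∫ z in Set.Ioi (0:ℝ),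
      (Real.exp (-β * z) - 1 + Set.indicator (Set.Ioo (0:ℝ) 1) (fun w => β * w) z) ∂ν

/-- `Z(x) = 1 + q ∫_0^{max(x,0)} W(y) dy`. -/
noncomputable def Zfun (q : ℝ) (W : ℝ → ℝ) (x : ℝ) : ℝ :=
  1 + q * ∫ y in (0:ℝ)..(max x 0), W y

open scoped Topology

section MomentGeneratingFunction

open ProbabilityTheory

theorem eqOn_complexMGF_of_mgf_eventuallyEq {μ μ' : Measure ℝ} {t₀ : ℝ}
    (ht₀ : t₀ ∈ interior (integrableExpSet id μ)) (ht₀' : t₀ ∈ interior (integrableExpSet id μ'))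
    (h : mgf id μ =ᶠ[𝓝 t₀] mgf id μ') :
    EqOn (complexMGF id μ) (complexMGF id μ')
      {z | z.re ∈ interior (integrableExpSet id μ) ∩ interior (integrableExpSet id μ')} := by
  refine AnalyticOnNhd.eqOn_of_preconnected_of_frequently_eq (z₀ := (t₀ : ℂ))
    (analyticOnNhd_complexMGF.mono fun z hz => hz.1)
    (analyticOnNhd_complexMGF.mono fun z hz => hz.2)
    ((convex_integrableExpSet.interior.inter convex_integrableExpSet.interior).linear_preimage
      Complex.reLm).isPreconnected ⟨ht₀, ht₀'⟩ ?_
  have real_tendsto : Tendsto ((↑) : ℝ → ℂ) (𝓝[≠] t₀) (𝓝[≠] (t₀ : ℂ)) :=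
    Complex.continuous_ofReal.continuousAt.continuousWithinAt.tendsto_nhdsWithin
      fun t ht => Complex.ofReal_injective.ne ht
  refine real_tendsto.frequently (Eventually.frequently ?_)
  filter_upwards [h.filter_mono nhdsWithin_le_nhds] with t ht
  rw [complexMGF_ofReal, complexMGF_ofReal, ht]

theorem ext_of_mgf_eventuallyEq {μ μ' : Measure ℝ} [IsFiniteMeasure μ] [IsFiniteMeasure μ']
    (h0 : 0 ∈ interior (integrableExpSet id μ)) (h0' : 0 ∈ interior (integrableExpSet id μ'))
    (h : mgf id μ =ᶠ[𝓝 0] mgf id μ') : μ = μ' := by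
  refine Measure.ext_of_charFun (funext fun t => ?_)
  rw [← complexMGF_id_mul_I, ← complexMGF_id_mul_I]
  exact eqOn_complexMGF_of_mgf_eventuallyEq h0 h0' h (by simpa using ⟨h0, h0'⟩)

variable {α : Type*} [MeasurableSpace α] {μ : Measure α} {X f : α → ℝ} {t : ℝ}

theorem integrable_exp_mul_max_zero
    (h : Integrable (fun x => exp (t * X x) * f x) μ) :
    Integrable (fun x => exp (t * X x) * max (f x) 0) μ := by
  refine h.pos_part.congr (Eventually.of_forall fun x => ?_)
  simp only [mul_max_of_nonneg _ _ (exp_pos _).le, mul_zero]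

theorem integrable_exp_mul_withDensity_ofReal (hf : AEMeasurable f μ)
    (h : Integrable (fun x => exp (t * X x) * f x) μ) :
    Integrable (fun x => exp (t * X x)) (μ.withDensity fun x => ENNReal.ofReal (f x)) := by
  rw [integrable_withDensity_iff_integrable_smul₀' hf.ennreal_ofReal (by simp)]
  simpa only [smul_eq_mul, ENNReal.toReal_ofReal', mul_comm] using integrable_exp_mul_max_zero h

theorem mgf_withDensity_ofReal (hf : AEMeasurable f μ) :
    mgf X (μ.withDensity fun x => ENNReal.ofReal (f x)) t =
      ∫ x, exp (t * X x) * max (f x) 0 ∂μ := by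
  rw [mgf, integral_withDensity_eq_integral_toReal_smul₀ hf.ennreal_ofReal (by simp)]
  simp only [smul_eq_mul, ENNReal.toReal_ofReal', mul_comm]

theorem mgf_withDensity_ofReal_sub_mgf_withDensity_ofReal_neg (hf : AEMeasurable f μ)
    (h : Integrable (fun x => exp (t * X x) * f x) μ) :
    mgf X (μ.withDensity fun x => ENNReal.ofReal (f x)) t -
      mgf X (μ.withDensity fun x => ENNReal.ofReal (-f x)) t = ∫ x, exp (t * X x) * f x ∂μ := by
  rw [mgf_withDensity_ofReal hf, mgf_withDensity_ofReal hf.fun_neg,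
    ← integral_sub (integrable_exp_mul_max_zero h)
      (integrable_exp_mul_max_zero (by simpa only [mul_neg] using h.fun_neg))]
  simp only [← mul_sub, max_zero_sub_eq_self]

theorem ae_eq_zero_of_integral_exp_mul_eventually_eq_zero {μ : Measure ℝ} {f : ℝ → ℝ}
    (hint : ∀ᶠ t in 𝓝 0, Integrable (fun x => exp (t * x) * f x) μ)
    (hzero : ∀ᶠ t in 𝓝 0, ∫ x, exp (t * x) * f x ∂μ = 0) : f =ᵐ[μ] 0 := by
  have hf : Integrable f μ := by simpa using hint.self_of_nhds
  have hpos := hf.aemeasurable.ennreal_ofReal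
  have hneg := hf.aemeasurable.fun_neg.ennreal_ofReal
  have := isFiniteMeasure_withDensity hf.lintegral_lt_top.ne
  have := isFiniteMeasure_withDensity hf.fun_neg.lintegral_lt_top.ne
  have parts_eq : μ.withDensity (fun x => ENNReal.ofReal (f x)) =
      μ.withDensity fun x => ENNReal.ofReal (-f x) := by
    refine ext_of_mgf_eventuallyEq ?_ ?_ ?_
    · rw [mem_interior_iff_mem_nhds]
      filter_upwards [hint] with t ht
      exact integrable_exp_mul_withDensity_ofReal hf.aemeasurable ht
    · rw [mem_interior_iff_mem_nhds]
      filter_upwards [hint] with t ht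
      exact integrable_exp_mul_withDensity_ofReal hf.aemeasurable.fun_neg
        (by simpa only [mul_neg, id] using ht.fun_neg)
    · filter_upwards [hint, hzero] with t ht ht0
      rw [← sub_eq_zero, ← ht0]
      exact mgf_withDensity_ofReal_sub_mgf_withDensity_ofReal_neg hf.aemeasurable ht
  filter_upwards [(withDensity_eq_iff hpos hneg hf.lintegral_lt_top.ne).1 parts_eq] with x hx
  have max_eq : max (f x) 0 = max (-f x) 0 := by
    simpa only [ENNReal.toReal_ofReal'] using congrArg ENNReal.toReal hx
  rw [Pi.zero_apply, ← max_zero_sub_eq_self (f x), max_eq, sub_self]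

end MomentGeneratingFunction

section LaplaceTransform

/-- The (one-sided) Laplace transform of `f` converges absolutely at the real point `β`, with
value `L`. Only the restriction of `f` to `(0, ∞)` matters. -/
def HasLaplaceTransform (f : ℝ → ℝ) (β L : ℝ) : Prop :=
  IntegrableOn (fun x => exp (-β * x) * f x) (Ioi 0) ∧ ∫ x in Ioi 0, exp (-β * x) * f x = L

namespace HasLaplaceTransform

variable {f g : ℝ → ℝ} {β L M : ℝ}

theorem add (hf : HasLaplaceTransform f β L) (hg : HasLaplaceTransform g β M) :
    HasLaplaceTransform (fun x => f x + g x) β (L + M) := by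
  simp only [HasLaplaceTransform, mul_add]
  exact ⟨hf.1.add hg.1, by rw [integral_add hf.1 hg.1, hf.2, hg.2]⟩

theorem const_mul (hf : HasLaplaceTransform f β L) (r : ℝ) :
    HasLaplaceTransform (fun x => r * f x) β (r * L) := by
  simp only [HasLaplaceTransform, mul_left_comm _ r]
  exact ⟨hf.1.const_mul r, by rw [integral_const_mul, hf.2]⟩

theorem sub (hf : HasLaplaceTransform f β L) (hg : HasLaplaceTransform g β M) :
    HasLaplaceTransform (fun x => f x - g x) β (L - M) := by
  simpa only [neg_one_mul, ← sub_eq_add_neg] using hf.add (hg.const_mul (-1))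

theorem one (hβ : 0 < β) : HasLaplaceTransform (fun _ => 1) β (1 / β) := by
  simp only [HasLaplaceTransform, mul_one]
  refine ⟨integrableOn_exp_mul_Ioi (neg_neg_of_pos hβ) 0, ?_⟩
  rw [integral_exp_mul_Ioi (neg_neg_of_pos hβ), mul_zero, exp_zero, neg_div_neg_eq]

theorem integral_comp (hf : HasLaplaceTransform f β L) (hβ : 0 < β) :
    HasLaplaceTransform (fun x => ∫ t in 0..x, f t) β (L / β) := by
  have exp_convolution : ∀ x, ∫ t in 0..x, exp (-β * t) * f t * (exp (-β * (x - t)) * 1) =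
      exp (-β * x) * ∫ t in 0..x, f t := fun x => by
    rw [← intervalIntegral.integral_const_mul]
    refine intervalIntegral.integral_congr fun t _ => ?_
    rw [mul_one, mul_right_comm, ← exp_add]
    ring_nf
  have hone := one hβ
  constructor
  · have := integrable_posConvolution hf.1 hone.1 (ContinuousLinearMap.mul ℝ ℝ)
    simpa only [posConvolution, ContinuousLinearMap.mul_apply', exp_convolution,
      integrable_indicator_iff measurableSet_Ioi] using this
  · have := integral_posConvolution hf.1 hone.1 (ContinuousLinearMap.mul ℝ ℝ)
    simpa only [ContinuousLinearMap.mul_apply', exp_convolution, hf.2, hone.2, mul_one_div]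
      using this

theorem iff_integral_of_eq_zero_of_neg (hf0 : ∀ x < 0, f x = 0) :
    HasLaplaceTransform f β L ↔
      Integrable (fun x => exp (-β * x) * f x) ∧ ∫ x, exp (-β * x) * f x = L := by
  have exp_mul_eq_zero : ∀ x ∉ Ici (0 : ℝ), exp (-β * x) * f x = 0 := fun x hx => by
    rw [hf0 x (not_le.1 hx), mul_zero]
  rw [HasLaplaceTransform, ← integrableOn_Ici_iff_integrableOn_Ioi, ← integral_Ici_eq_integral_Ioi,
    integrableOn_iff_integrable_of_support_subset (Function.support_subset_iff'.2 exp_mul_eq_zero),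
    setIntegral_eq_integral_of_forall_compl_eq_zero exp_mul_eq_zero]

theorem comp_sub_right (hf : HasLaplaceTransform f β L) (hf0 : ∀ x < 0, f x = 0) {u : ℝ}
    (hu : 0 ≤ u) : HasLaplaceTransform (fun x => f (x - u)) β (exp (-β * u) * L) := by
  have exp_shift : ∀ x, exp (-β * x) * f (x - u) =
      exp (-β * u) * (exp (-β * (x - u)) * f (x - u)) := fun x => by
    rw [← mul_assoc, ← exp_add]
    ring_nf
  rw [iff_integral_of_eq_zero_of_neg hf0] at hf
  rw [iff_integral_of_eq_zero_of_neg fun x hx => hf0 _ (by linarith)]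
  simp only [exp_shift]
  refine ⟨(hf.1.comp_sub_right u).const_mul _, ?_⟩
  rw [integral_const_mul, integral_sub_right_eq_self (fun x => exp (-β * x) * f x), hf.2]

end HasLaplaceTransform

theorem tendsto_of_hasLaplaceTransform {f L : ℝ → ℝ} {b : ℝ}
    (h : ∀ β > b, HasLaplaceTransform f β (L β)) : Tendsto L atTop (𝓝 0) := by
  have hb := (h (b + 1) (lt_add_one b)).1
  have integral_tendsto : Tendsto (fun β => ∫ x in Ioi 0, exp (-β * x) * f x) atTop
      (𝓝 (∫ _ in Ioi (0 : ℝ), 0)) := by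
    refine tendsto_integral_filter_of_dominated_convergence _ ?_ ?_ hb.norm ?_
    · filter_upwards [eventually_gt_atTop b] with β hβ using (h β hβ).1.aestronglyMeasurable
    · filter_upwards [eventually_ge_atTop (b + 1)] with β hβ
      filter_upwards [ae_restrict_mem measurableSet_Ioi] with x (hx : 0 < x)
      rw [norm_mul, norm_mul, norm_of_nonneg (exp_pos _).le, norm_of_nonneg (exp_pos _).le]
      gcongr
    · filter_upwards [ae_restrict_mem measurableSet_Ioi] with x (hx : 0 < x)
      have : Tendsto (fun β => exp (-β * x)) atTop (𝓝 0) :=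
        tendsto_exp_atBot.comp (tendsto_neg_atTop_atBot.atBot_mul_const hx)
      simpa only [zero_mul] using this.mul_const (f x)
  rw [integral_zero] at integral_tendsto
  refine integral_tendsto.congr' ?_
  filter_upwards [eventually_gt_atTop b] with β hβ using (h β hβ).2

theorem ae_eq_zero_of_hasLaplaceTransform_const {f : ℝ → ℝ} {b k : ℝ}
    (h : ∀ β > b, HasLaplaceTransform f β k) : f =ᵐ[volume.restrict (Ioi 0)] 0 := by
  have hk : k = 0 := tendsto_nhds_unique tendsto_const_nhds (tendsto_of_hasLaplaceTransform h)
  have tilt : ∀ t x : ℝ, exp (t * x) * (exp (-(b + 1) * x) * f x) =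
      exp (-(b + 1 - t) * x) * f x := fun t x => by
    rw [← mul_assoc, ← exp_add]
    ring_nf
  have near_zero : ∀ᶠ t : ℝ in 𝓝 0, b + 1 - t > b := by
    filter_upwards [gt_mem_nhds one_pos] with t ht
    linarith
  have tilted_eq_zero : (fun x => exp (-(b + 1) * x) * f x) =ᵐ[volume.restrict (Ioi 0)] 0 := by
    refine ae_eq_zero_of_integral_exp_mul_eventually_eq_zero ?_ ?_
    · filter_upwards [near_zero] with t ht
      simpa only [tilt, IntegrableOn] using (h _ ht).1
    · filter_upwards [near_zero] with t ht
      simpa only [tilt, hk] using (h _ ht).2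
  filter_upwards [tilted_eq_zero] with x hx
  exact (mul_eq_zero.1 hx).resolve_left (exp_ne_zero _)

theorem tendsto_exp_mul_atTop_of_monotoneOn {f : ℝ → ℝ} {β L : ℝ} (hβ : 0 < β)
    (hf : MonotoneOn f (Ici 0)) (hL : HasLaplaceTransform f β L) :
    Tendsto (fun y => exp (-β * y) * f y) atTop (𝓝 0) := by
  have exp_tail : ∀ y, ∫ x in Ioi y, exp (-β * x) = exp (-β * y) / β := fun y => by
    rw [integral_exp_mul_Ioi (neg_neg_of_pos hβ), neg_div_neg_eq]
  have lower : Tendsto (fun y => exp (-β * y) * f 0) atTop (𝓝 0) := by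
    have : Tendsto (fun y => exp (-β * y)) atTop (𝓝 0) :=
      tendsto_exp_atBot.comp (tendsto_id.const_mul_atTop_of_neg (neg_neg_of_pos hβ))
    simpa only [zero_mul] using this.mul_const (f 0)
  have upper : Tendsto (fun y => β * ∫ x in Ioi y, exp (-β * x) * f x) atTop (𝓝 0) := by
    simpa only [mul_zero, id] using (tendsto_integral_Ioi_zero tendsto_id).const_mul β
  refine tendsto_of_tendsto_of_tendsto_of_le_of_le' lower upper ?_ ?_
  · filter_upwards [eventually_ge_atTop 0] with y hy
    exact mul_le_mul_of_nonneg_left (hf self_mem_Ici hy hy) (exp_pos _).le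
  · filter_upwards [eventually_ge_atTop 0] with y hy
    calc exp (-β * y) * f y = β * ∫ x in Ioi y, exp (-β * x) * f y := by
          rw [integral_mul_const, exp_tail]
          field_simp
      _ ≤ β * ∫ x in Ioi y, exp (-β * x) * f x := by
          refine mul_le_mul_of_nonneg_left (setIntegral_mono_on
            ((integrableOn_exp_mul_Ioi (neg_neg_of_pos hβ) y).mul_const _)
            (hL.1.mono_set (Ioi_subset_Ioi hy)) measurableSet_Ioi fun x hx => ?_) hβ.le
          have hyx : y ≤ x := le_of_lt hx
          exact mul_le_mul_of_nonneg_left (hf hy (hy.trans hyx) hyx) (exp_pos _).le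

theorem hasDerivAt_integral_of_continuousOn_Ici {E : Type*} [NormedAddCommGroup E] [NormedSpace ℝ E]
    [CompleteSpace E] {f : ℝ → E} {a y : ℝ} (hf : ContinuousOn f (Ici a)) (hy : a < y) :
    HasDerivAt (fun y => ∫ x in a..y, f x) (f y) y :=
  intervalIntegral.integral_hasDerivAt_right
    ((hf.mono Icc_subset_Ici_self).intervalIntegrable_of_Icc hy.le)
    ((hf.mono Ioi_subset_Ici_self).stronglyMeasurableAtFilter isOpen_Ioi y hy)
    (hf.continuousAt (Ici_mem_nhds hy))

theorem continuousWithinAt_integral_of_continuousOn_Ici {E : Type*} [NormedAddCommGroup E]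
    [NormedSpace ℝ E] {f : ℝ → E} {a : ℝ} (hf : ContinuousOn f (Ici a)) :
    ContinuousWithinAt (fun y => ∫ x in a..y, f x) (Ici a) a := by
  have ha : a < a + 1 := lt_add_one a
  have hint : IntegrableOn f (uIcc a (a + 1)) := by
    rw [uIcc_of_le ha.le]
    exact (hf.mono Icc_subset_Ici_self).integrableOn_Icc
  have := intervalIntegral.continuousOn_primitive_interval hint a left_mem_uIcc
  rwa [uIcc_of_le ha.le, continuousWithinAt_Icc_iff_Ici ha] at this

theorem HasLaplaceTransform.deriv_of_monotoneOn {f : ℝ → ℝ} {β L : ℝ}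
    (hL : HasLaplaceTransform f β L) (hβ : 0 < β) (hf : MonotoneOn f (Ici 0))
    (hfc : ContinuousOn f (Ici 0)) (hfd : ∀ x ∈ Ioi 0, DifferentiableAt ℝ f x) :
    HasLaplaceTransform (deriv f) β (β * L - f 0) := by
  set e : ℝ → ℝ := fun x => exp (-β * x) * f x with he
  set A : ℝ → ℝ := fun y => ∫ x in 0..y, e x with hA
  have hec : ContinuousOn e (Ici 0) := ContinuousOn.mul (by fun_prop) hfc
  have hAd : ∀ y ∈ Ioi 0, HasDerivAt A (e y) y := fun y hy =>
    hasDerivAt_integral_of_continuousOn_Ici hec hy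
  have hAc : ContinuousWithinAt A (Ici 0) 0 := continuousWithinAt_integral_of_continuousOn_Ici hec
  have hderiv : ∀ y ∈ Ioi 0, HasDerivAt (fun y => β * A y + e y) (exp (-β * y) * deriv f y) y :=
    fun y hy => by
      have hexp : HasDerivAt (fun y => exp (-β * y)) (exp (-β * y) * -β) y := by
        simpa using ((hasDerivAt_id y).const_mul (-β)).exp
      refine (((hAd y hy).const_mul β).add (hexp.mul (hfd y hy).hasDerivAt)).congr_deriv ?_
      simp only [he]
      ring
  have hnonneg : ∀ y ∈ Ioi (0 : ℝ), 0 ≤ exp (-β * y) * deriv f y := fun y hy => by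
    rw [← derivWithin_of_mem_nhds (Ici_mem_nhds hy)]
    exact mul_nonneg (exp_pos _).le hf.derivWithin_nonneg
  have hlim : Tendsto (fun y => β * A y + e y) atTop (𝓝 (β * L)) := by
    have := intervalIntegral_tendsto_integral_Ioi 0 hL.1 tendsto_id
    rw [hL.2] at this
    simpa only [add_zero, id] using
      (this.const_mul β).add (tendsto_exp_mul_atTop_of_monotoneOn hβ hf hL)
  have hcont := (hAc.const_mul β).add (hec 0 self_mem_Ici)
  refine ⟨integrableOn_Ioi_deriv_of_nonneg hcont hderiv hnonneg hlim, ?_⟩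
  rw [integral_Ioi_of_hasDerivAt_of_nonneg hcont hderiv hnonneg hlim]
  simp [hA, he]

theorem tendsto_mul_of_hasLaplaceTransform {f L : ℝ → ℝ} {b : ℝ}
    (hf : MonotoneOn f (Ici 0)) (hfc : ContinuousOn f (Ici 0))
    (hfd : ∀ x ∈ Ioi 0, DifferentiableAt ℝ f x)
    (hL : ∀ β > b, HasLaplaceTransform f β (L β)) :
    Tendsto (fun β => β * L β) atTop (𝓝 (f 0)) := by
  have := tendsto_of_hasLaplaceTransform (b := max b 0) fun β hβ =>
    (hL β ((le_max_left _ _).trans_lt hβ)).deriv_of_monotoneOn ((le_max_right _ _).trans_lt hβ)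
      hf hfc hfd
  simpa only [sub_add_cancel, zero_add] using this.add_const (f 0)

theorem norm_integral_eq_integral_norm_of_ae_nonneg_or_ae_nonpos {α : Type*} [MeasurableSpace α]
    {μ : Measure α} {f : α → ℝ} (hf : 0 ≤ᵐ[μ] f ∨ f ≤ᵐ[μ] 0) :
    ‖∫ x, f x ∂μ‖ = ∫ x, ‖f x‖ ∂μ := by
  obtain hf | hf := hf
  · rw [norm_of_nonneg (integral_nonneg_of_ae hf)]
    exact integral_congr_ae (hf.mono fun x hx => (norm_of_nonneg hx).symm)
  · rw [norm_of_nonpos (integral_nonpos_of_ae hf), ← integral_neg]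
    exact integral_congr_ae (hf.mono fun x hx => (norm_of_nonpos hx).symm)

theorem hasLaplaceTransform_integral {α : Type*} [MeasurableSpace α] {n : Measure α} [SFinite n]
    {k : ℝ → α → ℝ} {ℓ : α → ℝ} {β : ℝ}
    (hk : AEStronglyMeasurable (Function.uncurry k) ((volume.restrict (Ioi 0)).prod n))
    (hsign : ∀ᵐ u ∂n, (∀ x > 0, 0 ≤ k x u) ∨ ∀ x > 0, k x u ≤ 0)
    (hℓ : ∀ᵐ u ∂n, HasLaplaceTransform (k · u) β (ℓ u)) (hint : Integrable ℓ n) :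
    HasLaplaceTransform (fun x => ∫ u, k x u ∂n) β (∫ u, ℓ u ∂n) := by
  have integral_norm : ∀ᵐ u ∂n, ‖ℓ u‖ = ∫ x in Ioi 0, ‖exp (-β * x) * k x u‖ := by
    filter_upwards [hsign, hℓ] with u hu hℓu
    rw [← hℓu.2]
    refine norm_integral_eq_integral_norm_of_ae_nonneg_or_ae_nonpos (hu.imp ?_ ?_) <;>
      refine fun hu => (ae_restrict_mem measurableSet_Ioi).mono fun x hx => ?_
    · exact mul_nonneg (exp_pos _).le (hu x hx)
    · exact mul_nonpos_of_nonneg_of_nonpos (exp_pos _).le (hu x hx)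
  have joint_integrable : Integrable (Function.uncurry fun x u => exp (-β * x) * k x u)
      ((volume.restrict (Ioi 0)).prod n) := by
    have hexp : Measurable fun p : ℝ × α => exp (-β * p.1) := by fun_prop
    refine (integrable_prod_iff' (hexp.aestronglyMeasurable.mul hk)).2 ?_
    exact ⟨hℓ.mono fun u hu => hu.1, hint.norm.congr integral_norm⟩
  simp only [HasLaplaceTransform, ← integral_const_mul]
  refine ⟨joint_integrable.integral_prod_left, ?_⟩
  rw [integral_integral_swap joint_integrable]
  exact integral_congr_ae (hℓ.mono fun u hu => hu.2)

end LaplaceTransform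
section LevyMeasure

variable {ν : Measure ℝ} {β u : ℝ}

/-- The truncated jump size `u 1_{(0,1)}(u)`, which compensates the small jumps. -/
noncomputable def smallJump (u : ℝ) : ℝ :=
  (Ioo 0 1).indicator id u

/-- The integrand `e^{−βu} − 1 + βu 1_{(0,1)}(u)` of the jump part of the Laplace exponent. -/
noncomputable def compensatedExp (β u : ℝ) : ℝ :=
  exp (-β * u) - 1 + β * smallJump u

theorem measurable_smallJump : Measurable smallJump :=
  measurable_id.indicator measurableSet_Ioo

theorem smallJump_of_lt_one (hu : 0 < u) (hu1 : u < 1) : smallJump u = u :=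
  indicator_of_mem (mem_Ioo.2 ⟨hu, hu1⟩) id

theorem smallJump_of_one_le (hu : 1 ≤ u) : smallJump u = 0 :=
  indicator_of_notMem (fun h => h.2.not_ge hu) id

theorem smallJump_mem_Icc (u : ℝ) : smallJump u ∈ Icc 0 1 := by
  by_cases hu : u ∈ Ioo 0 1
  · rw [smallJump_of_lt_one hu.1 hu.2]
    exact Ioo_subset_Icc_self hu
  · rw [smallJump, indicator_of_notMem hu]
    exact left_mem_Icc.2 zero_le_one

theorem laplaceExponent_eq (c σ : ℝ) (ν : Measure ℝ) (β : ℝ) :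
    laplaceExponent c σ ν β =
      c * β + σ ^ 2 / 2 * β ^ 2 + ∫ u in Ioi 0, compensatedExp β u ∂ν := by
  have indicator_eq : ∀ u, (Ioo 0 1).indicator (fun w => β * w) u = β * smallJump u :=
    fun u => indicator_const_mul _ id β u
  simp only [laplaceExponent, compensatedExp, indicator_eq]

theorem exp_neg_sub_one_add_mem_Icc {x : ℝ} (hx : 0 ≤ x) : exp (-x) - 1 + x ∈ Icc 0 (x ^ 2) := by
  refine ⟨by linarith [one_sub_le_exp_neg x], ?_⟩
  obtain hx1 | hx1 := le_total x 1
  · have := abs_exp_sub_one_sub_id_le (x := -x) (by rwa [abs_neg, abs_of_nonneg hx])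
    rw [sub_neg_eq_add, neg_sq] at this
    exact (le_abs_self _).trans this
  · nlinarith [exp_le_one_iff.2 (neg_nonpos.2 hx)]

theorem abs_compensatedExp_le (hβ : 0 ≤ β) (hu : 0 < u) :
    |compensatedExp β u| ≤ (1 + β ^ 2) * min 1 (u ^ 2) := by
  have hβu : 0 ≤ β * u := mul_nonneg hβ hu.le
  rw [compensatedExp, neg_mul]
  obtain hu1 | hu1 := lt_or_ge u 1
  · obtain ⟨lower, upper⟩ := exp_neg_sub_one_add_mem_Icc hβu
    rw [smallJump_of_lt_one hu hu1, abs_of_nonneg lower, min_eq_right (pow_le_one₀ hu.le hu1.le)]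
    nlinarith
  · have : exp (-(β * u)) ≤ 1 := exp_le_one_iff.2 (neg_nonpos.2 hβu)
    rw [smallJump_of_one_le hu1, min_eq_left (one_le_pow₀ hu1), abs_le]
    constructor <;> nlinarith [exp_pos (-(β * u))]

theorem integrableOn_compensatedExp (hν : IntegrableOn (fun u => min 1 (u ^ 2)) (Ioi 0) ν)
    (hβ : 0 ≤ β) : IntegrableOn (compensatedExp β) (Ioi 0) ν := by
  have : Measurable (compensatedExp β) := by
    have := measurable_smallJump
    unfold compensatedExp
    fun_prop
  refine (hν.const_mul (1 + β ^ 2)).mono' this.aestronglyMeasurable ?_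
  filter_upwards [ae_restrict_mem measurableSet_Ioi] with u hu using abs_compensatedExp_le hβ hu

theorem integrableOn_min_one_sq
    (hν : ∫⁻ u in Ioi 0, ENNReal.ofReal (min 1 (u ^ 2)) ∂ν < ⊤) :
    IntegrableOn (fun u => min 1 (u ^ 2)) (Ioi 0) ν := by
  refine ⟨by fun_prop, ?_⟩
  rwa [hasFiniteIntegral_iff_ofReal (Eventually.of_forall fun u => by positivity)]

theorem sFinite_of_integrable_of_ae_ne_zero {α : Type*} [MeasurableSpace α] {μ : Measure α}
    {f : α → ℝ} (hf : Integrable f μ) (hf0 : ∀ᵐ x ∂μ, f x ≠ 0) : SFinite μ := by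
  have := isFiniteMeasure_withDensity hf.2.ne
  exact sFinite_of_absolutelyContinuous
    (withDensity_absolutelyContinuous' hf.1.enorm (hf0.mono fun x => enorm_ne_zero.2))

theorem sFinite_restrict_Ioi (hν : IntegrableOn (fun u => min 1 (u ^ 2)) (Ioi 0) ν) :
    SFinite (ν.restrict (Ioi 0)) := by
  refine sFinite_of_integrable_of_ae_ne_zero hν ?_
  filter_upwards [ae_restrict_mem measurableSet_Ioi] with u (hu : 0 < u)
  positivity

end LevyMeasure

section JumpKernel

variable {W : ℝ → ℝ} {y u : ℝ}

/-- The integrand `f(y − u) − f(y) + f'(y) u 1_{(0,1)}(u)` of the jump part of the generator of the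
process with Laplace exponent `ψ`, evaluated at the primitive `f(y) = ∫_0^y W`. -/
noncomputable def jumpKernel (W : ℝ → ℝ) (y u : ℝ) : ℝ :=
  (∫ w in 0..y - u, W w) - (∫ w in 0..y, W w) + W y * smallJump u

theorem nonneg_of_monotone_of_eq_zero_of_neg (hW : Monotone W) (hW0 : ∀ w < 0, W w = 0) (y : ℝ) :
    0 ≤ W y := by
  rw [← hW0 (min y 0 - 1) (by linarith [min_le_right y 0])]
  exact hW (by linarith [min_le_left y 0])

theorem integral_zero_eq_zero_of_nonpos (hW0 : ∀ w < 0, W w = 0) (hy : y ≤ 0) :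
    ∫ w in 0..y, W w = 0 := by
  refine intervalIntegral.integral_zero_ae ?_
  filter_upwards [Measure.ae_ne volume 0] with w hw0 hw
  rw [uIoc_of_ge hy] at hw
  exact hW0 w (lt_of_le_of_ne hw.2 hw0)

theorem monotone_integral_zero (hW : Monotone W) (hW0 : ∀ w < 0, W w = 0) :
    Monotone fun y => ∫ w in 0..y, W w := fun a b hab => by
  rw [← sub_nonneg, intervalIntegral.integral_interval_sub_left hW.intervalIntegrable
    hW.intervalIntegrable]
  exact intervalIntegral.integral_nonneg hab
    fun w _ => nonneg_of_monotone_of_eq_zero_of_neg hW hW0 w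

theorem integral_zero_nonneg (hW : Monotone W) (hW0 : ∀ w < 0, W w = 0) (y : ℝ) :
    0 ≤ ∫ w in 0..y, W w :=
  nonneg_of_monotone_of_eq_zero_of_neg (monotone_integral_zero hW hW0)
    (fun _ hw => integral_zero_eq_zero_of_nonpos hW0 hw.le) y

theorem continuous_integral_zero (hW : Monotone W) : Continuous fun y => ∫ w in 0..y, W w :=
  intervalIntegral.continuous_primitive (fun _ _ => hW.intervalIntegrable) 0

theorem integral_mem_Icc_of_monotone (hW : Monotone W) {a b : ℝ} (hab : a ≤ b) :
    ∫ w in a..b, W w ∈ Icc ((b - a) * W a) ((b - a) * W b) := by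
  rw [← smul_eq_mul, ← smul_eq_mul, ← intervalIntegral.integral_const,
    ← intervalIntegral.integral_const]
  exact ⟨intervalIntegral.integral_mono_on hab intervalIntegrable_const hW.intervalIntegrable
      fun w hw => hW hw.1,
    intervalIntegral.integral_mono_on hab hW.intervalIntegrable intervalIntegrable_const
      fun w hw => hW hw.2⟩

theorem jumpKernel_eq (hW : Monotone W) (y u : ℝ) :
    jumpKernel W y u = W y * smallJump u - ∫ w in y - u..y, W w := by
  rw [jumpKernel, ← intervalIntegral.integral_interval_sub_left (hW.intervalIntegrable (a := 0))
    (hW.intervalIntegrable (a := 0) (b := y - u))]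
  ring

theorem measurable_uncurry_jumpKernel (hW : Monotone W) :
    Measurable (Function.uncurry (jumpKernel W)) := by
  have := (continuous_integral_zero hW).measurable
  have := measurable_smallJump
  have := hW.measurable
  unfold jumpKernel Function.uncurry
  fun_prop

theorem jumpKernel_nonneg_or_nonpos (hW : Monotone W) (hW0 : ∀ w < 0, W w = 0) (hu : 0 < u) :
    (∀ y, 0 ≤ jumpKernel W y u) ∨ ∀ y, jumpKernel W y u ≤ 0 := by
  have integral_bounds : ∀ y, ∫ w in y - u..y, W w ∈ Icc (u * W (y - u)) (u * W y) := fun y => by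
    simpa only [sub_sub_cancel] using integral_mem_Icc_of_monotone hW (sub_le_self y hu.le)
  obtain hu1 | hu1 := lt_or_ge u 1
  · refine Or.inl fun y => ?_
    rw [jumpKernel_eq hW, smallJump_of_lt_one hu hu1]
    linarith [(integral_bounds y).2]
  · refine Or.inr fun y => ?_
    have := mul_nonneg hu.le (nonneg_of_monotone_of_eq_zero_of_neg hW hW0 (y - u))
    rw [jumpKernel_eq hW, smallJump_of_one_le hu1]
    linarith [(integral_bounds y).1]

theorem HasLaplaceTransform.jumpKernel_left {β L : ℝ} (hL : HasLaplaceTransform W β L) (hβ : 0 < β)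
    (hW0 : ∀ w < 0, W w = 0) (hu : 0 ≤ u) :
    HasLaplaceTransform (fun y => jumpKernel W y u) β (L / β * compensatedExp β u) := by
  have hprim := hL.integral_comp hβ
  have := ((hprim.comp_sub_right (fun y hy => integral_zero_eq_zero_of_nonpos hW0 hy.le) hu).sub
    hprim).add (hL.const_mul (smallJump u))
  convert this using 1
  · simp only [jumpKernel, mul_comm]
  · rw [compensatedExp]
    field_simp

theorem abs_jumpKernel_le (hW : Monotone W) (hW0 : ∀ w < 0, W w = 0) {K : NNReal} {δ : ℝ}
    (hδ : 0 < δ) (hδ1 : δ ≤ 1) (hK : ∀ u ∈ Ioo 0 δ, W y - W (y - u) ≤ K * u) (hu : 0 < u) :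
    |jumpKernel W y u| ≤ (K + (W y + ∫ w in 0..y, W w) / δ ^ 2) * min 1 (u ^ 2) := by
  have hWy := nonneg_of_monotone_of_eq_zero_of_neg hW hW0 y
  have hP := integral_zero_nonneg hW hW0 y
  set C := (W y + ∫ w in 0..y, W w) / δ ^ 2 with hC
  have hC0 : 0 ≤ C := by positivity
  obtain huδ | huδ := lt_or_ge u δ
  · obtain ⟨lower, upper⟩ := integral_mem_Icc_of_monotone hW (sub_le_self y hu.le)
    have hu1 := huδ.trans_le hδ1
    rw [sub_sub_cancel] at lower upper
    rw [jumpKernel_eq hW, smallJump_of_lt_one hu hu1, min_eq_right (pow_le_one₀ hu.le hu1.le),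
      abs_of_nonneg (by linarith)]
    calc W y * u - ∫ w in y - u..y, W w ≤ u * (W y - W (y - u)) := by linarith
      _ ≤ u * (K * u) := mul_le_mul_of_nonneg_left (hK u ⟨hu, huδ⟩) hu.le
      _ ≤ (K + C) * u ^ 2 := by nlinarith [sq_nonneg u]
  · have hPu := integral_zero_nonneg hW hW0 (y - u)
    have hPle := monotone_integral_zero hW hW0 (sub_le_self y hu.le)
    dsimp only at hPle
    obtain ⟨hs0, hs1⟩ := smallJump_mem_Icc u
    calc |jumpKernel W y u| ≤ W y + ∫ w in 0..y, W w := by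
          rw [jumpKernel, abs_le]
          constructor <;> nlinarith
      _ = C * δ ^ 2 := by rw [hC, div_mul_cancel₀ _ (by positivity)]
      _ ≤ (K + C) * min 1 (u ^ 2) := by
          gcongr
          · exact le_add_of_nonneg_left K.2
          · exact le_min (pow_le_one₀ hδ.le hδ1) (by gcongr)

theorem exists_eventually_abs_jumpKernel_le (hW : Monotone W) (hW0 : ∀ w < 0, W w = 0)
    {K : NNReal} {t : Set ℝ} (ht : t ∈ 𝓝 y) (hK : LipschitzOnWith K W t) :
    ∃ C, ∀ᶠ x in 𝓝 y, ∀ u > 0, |jumpKernel W x u| ≤ C * min 1 (u ^ 2) := by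
  obtain ⟨ε, hε, hball⟩ := Metric.mem_nhds_iff.1 ht
  have hδ : 0 < min 1 (ε / 2) := lt_min one_pos (half_pos hε)
  refine ⟨K + (W (y + 1) + ∫ w in 0..y + 1, W w) / min 1 (ε / 2) ^ 2, ?_⟩
  filter_upwards [Metric.ball_mem_nhds y hδ] with x hx u hu
  rw [Real.ball_eq_Ioo] at hx hball
  have hδ1 := min_le_left 1 (ε / 2)
  have hδε := min_le_right 1 (ε / 2)
  have increment_le : ∀ v ∈ Ioo 0 (min 1 (ε / 2)), W x - W (x - v) ≤ K * v := fun v hv => by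
    have hxt : x ∈ t := hball ⟨by linarith [hx.1], by linarith [hx.2]⟩
    have hxvt : x - v ∈ t := hball ⟨by linarith [hx.1, hv.2], by linarith [hx.2, hv.1]⟩
    have := hK.dist_le_mul x hxt (x - v) hxvt
    rw [dist_eq, dist_eq, sub_sub_cancel, abs_of_pos hv.1] at this
    exact (le_abs_self _).trans this
  refine (abs_jumpKernel_le hW hW0 hδ hδ1 increment_le hu).trans ?_
  have hxy : x ≤ y + 1 := by linarith [hx.2]
  gcongr
  · exact hW hxy
  · exact monotone_integral_zero hW hW0 hxy

variable {ν : Measure ℝ}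

theorem integrableOn_jumpKernel (hν : IntegrableOn (fun u => min 1 (u ^ 2)) (Ioi 0) ν)
    (hW : Monotone W) (hW0 : ∀ w < 0, W w = 0) {K : NNReal} {t : Set ℝ} (ht : t ∈ 𝓝 y)
    (hK : LipschitzOnWith K W t) : IntegrableOn (jumpKernel W y) (Ioi 0) ν := by
  obtain ⟨C, hC⟩ := exists_eventually_abs_jumpKernel_le hW hW0 ht hK
  refine (hν.const_mul C).mono'
    (measurable_uncurry_jumpKernel hW).of_uncurry_left.aestronglyMeasurable ?_
  filter_upwards [ae_restrict_mem measurableSet_Ioi] with u hu using hC.self_of_nhds u hu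

theorem continuousAt_integral_jumpKernel (hν : IntegrableOn (fun u => min 1 (u ^ 2)) (Ioi 0) ν)
    (hW : Monotone W) (hW0 : ∀ w < 0, W w = 0) {K : NNReal} {t : Set ℝ} (ht : t ∈ 𝓝 y)
    (hK : LipschitzOnWith K W t) :
    ContinuousAt (fun x => ∫ u in Ioi 0, jumpKernel W x u ∂ν) y := by
  obtain ⟨C, hC⟩ := exists_eventually_abs_jumpKernel_le hW hW0 ht hK
  refine continuousAt_of_dominated (bound := fun u => C * min 1 (u ^ 2)) ?_ ?_ (hν.const_mul C) ?_
  · exact Eventually.of_forall fun x =>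
      (measurable_uncurry_jumpKernel hW).of_uncurry_left.aestronglyMeasurable
  · filter_upwards [hC] with x hx
    filter_upwards [ae_restrict_mem measurableSet_Ioi] with u hu using hx u hu
  · have hP := continuous_integral_zero hW
    have hWy : ContinuousAt W y := hK.continuousOn.continuousAt ht
    refine Eventually.of_forall fun u => ?_
    exact (((hP.comp (continuous_sub_right u)).sub hP).continuousAt).add (hWy.mul_const _)

end JumpKernel

section ScaleFunction

variable {c σ q b y : ℝ} {ν : Measure ℝ} {W : ℝ → ℝ}

theorem hasLaplaceTransform_of_integral_eq {β L : ℝ} (hL : L ≠ 0)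
    (h : ∫ w in Ioi 0, exp (-β * w) * W w = L) : HasLaplaceTransform W β L :=
  ⟨not_imp_comm.1 integral_undef (h ▸ hL), h⟩

theorem monotone_of_monotoneOn_Ici (hW0 : ∀ w < 0, W w = 0) (hWm : MonotoneOn W (Ici 0))
    (hnonneg : 0 ≤ W 0) : Monotone W := by
  refine MonotoneOn.Iic_union_Ici (a := 0) (fun x (hx : x ≤ 0) z (hz : z ≤ 0) hxz => ?_) hWm
  obtain rfl | hz := hz.eq_or_lt
  · obtain rfl | hx := hx.eq_or_lt
    · rfl
    · rwa [hW0 x hx]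
  · rw [hW0 x (hxz.trans_lt hz), hW0 z hz]

theorem monotone_of_hasLaplaceTransform_nonneg {L : ℝ → ℝ} (hW0 : ∀ w < 0, W w = 0)
    (hWc : ContinuousOn W (Ici 0)) (hWm : MonotoneOn W (Ici 0))
    (hWd : ∀ w ∈ Ioi 0, DifferentiableAt ℝ W w)
    (hWL : ∀ β > b, HasLaplaceTransform W β (L β)) (hL : ∀ β > b, 0 ≤ L β) : Monotone W := by
  refine monotone_of_monotoneOn_Ici hW0 hWm
    (ge_of_tendsto (tendsto_mul_of_hasLaplaceTransform hWm hWc hWd hWL) ?_)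
  filter_upwards [eventually_gt_atTop b, eventually_ge_atTop 0] with β hβb hβ
  exact mul_nonneg hβ (hL β hβb)

theorem exists_lipschitzOnWith_of_continuousOn_deriv {s : Set ℝ} (hs : IsOpen s)
    (hWd : ∀ w ∈ s, DifferentiableAt ℝ W w) (hWd' : ContinuousOn (deriv W) s) (hy : y ∈ s) :
    ∃ K, ∃ t ∈ 𝓝 y, LipschitzOnWith K W t := by
  have contDiffOn : ContDiffOn ℝ 1 W s := by
    rw [← zero_add 1, contDiffOn_succ_iff_deriv_of_isOpen hs]
    exact ⟨fun w hw => (hWd w hw).differentiableWithinAt, by simp, contDiffOn_zero.2 hWd'⟩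
  exact (contDiffOn.contDiffAt (hs.mem_nhds hy)).exists_lipschitzOnWith

theorem hasLaplaceTransform_integral_jumpKernel
    (hν : IntegrableOn (fun u => min 1 (u ^ 2)) (Ioi 0) ν) (hW : Monotone W)
    (hW0 : ∀ w < 0, W w = 0) {β L : ℝ} (hβ : 0 < β) (hL : HasLaplaceTransform W β L) :
    HasLaplaceTransform (fun y => ∫ u in Ioi 0, jumpKernel W y u ∂ν) β
      (L / β * ∫ u in Ioi 0, compensatedExp β u ∂ν) := by
  have := sFinite_restrict_Ioi hν
  rw [← integral_const_mul]
  refine hasLaplaceTransform_integral (measurable_uncurry_jumpKernel hW).aestronglyMeasurable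
    ?_ ?_ ((integrableOn_compensatedExp hν hβ.le).const_mul _)
  · filter_upwards [ae_restrict_mem measurableSet_Ioi] with u hu
    exact (jumpKernel_nonneg_or_nonpos hW hW0 hu).imp (fun h y _ => h y) fun h y _ => h y
  · filter_upwards [ae_restrict_mem measurableSet_Ioi] with u hu
    exact hL.jumpKernel_left hβ hW0 (le_of_lt hu)

/-- The defect `1 − (𝓛 − q)f(y)` in the equation `(𝓛 − q)f = 1` for `f(y) = ∫_0^y W`, where `𝓛` is
the generator of the process with Laplace exponent `ψ`. -/
noncomputable def generatorDefect (c σ q : ℝ) (ν : Measure ℝ) (W : ℝ → ℝ) (y : ℝ) : ℝ :=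
  1 + q * (∫ w in 0..y, W w) -
    (c * W y + σ ^ 2 / 2 * deriv W y + ∫ u in Ioi 0, jumpKernel W y u ∂ν)

theorem hasLaplaceTransform_generatorDefect
    (hν : IntegrableOn (fun u => min 1 (u ^ 2)) (Ioi 0) ν) (hW : Monotone W)
    (hW0 : ∀ w < 0, W w = 0) (hWc : ContinuousOn W (Ici 0))
    (hWd : ∀ w ∈ Ioi 0, DifferentiableAt ℝ W w) {β : ℝ} (hβ : 0 < β)
    (hψ : laplaceExponent c σ ν β ≠ q)
    (hL : HasLaplaceTransform W β (1 / (laplaceExponent c σ ν β - q))) :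
    HasLaplaceTransform (generatorDefect c σ q ν W) β (σ ^ 2 / 2 * W 0) := by
  have hderiv := hL.deriv_of_monotoneOn hβ (hW.monotoneOn _) hWc hWd
  have hjump := hasLaplaceTransform_integral_jumpKernel hν hW hW0 hβ hL
  have integral_eq : ∫ u in Ioi 0, compensatedExp β u ∂ν =
      laplaceExponent c σ ν β - c * β - σ ^ 2 / 2 * β ^ 2 := by
    rw [laplaceExponent_eq]
    ring
  convert ((HasLaplaceTransform.one hβ).add ((hL.integral_comp hβ).const_mul q)).sub
    (((hL.const_mul c).add (hderiv.const_mul (σ ^ 2 / 2))).add hjump) using 1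
  · rfl
  · have := sub_ne_zero.2 hψ
    rw [integral_eq]
    field_simp
    ring

theorem continuousOn_generatorDefect (hν : IntegrableOn (fun u => min 1 (u ^ 2)) (Ioi 0) ν)
    (hW : Monotone W) (hW0 : ∀ w < 0, W w = 0) (hWd : ∀ w ∈ Ioi 0, DifferentiableAt ℝ W w)
    (hWd' : ContinuousOn (deriv W) (Ioi 0)) :
    ContinuousOn (generatorDefect c σ q ν W) (Ioi 0) := by
  have hWc : ContinuousOn W (Ioi 0) := fun w hw => (hWd w hw).continuousAt.continuousWithinAt
  have hP := continuous_integral_zero hW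
  have hJ : ContinuousOn (fun y => ∫ u in Ioi 0, jumpKernel W y u ∂ν) (Ioi 0) := fun y hy => by
    obtain ⟨K, t, ht, hK⟩ := exists_lipschitzOnWith_of_continuousOn_deriv isOpen_Ioi hWd hWd' hy
    exact (continuousAt_integral_jumpKernel hν hW hW0 ht hK).continuousWithinAt
  unfold generatorDefect
  fun_prop

theorem generatorDefect_eq_zero (hν : IntegrableOn (fun u => min 1 (u ^ 2)) (Ioi 0) ν)
    (hW : Monotone W) (hW0 : ∀ w < 0, W w = 0) (hWc : ContinuousOn W (Ici 0))
    (hWd : ∀ w ∈ Ioi 0, DifferentiableAt ℝ W w) (hWd' : ContinuousOn (deriv W) (Ioi 0))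
    (hψ : ∀ β > b, laplaceExponent c σ ν β ≠ q)
    (hL : ∀ β > b, HasLaplaceTransform W β (1 / (laplaceExponent c σ ν β - q))) (hy : 0 < y) :
    generatorDefect c σ q ν W y = 0 := by
  have ae_zero : generatorDefect c σ q ν W =ᵐ[volume.restrict (Ioi 0)] 0 :=
    ae_eq_zero_of_hasLaplaceTransform_const (b := max b 0) fun β hβ =>
      have hβb : b < β := (le_max_left b 0).trans_lt hβ
      hasLaplaceTransform_generatorDefect hν hW hW0 hWc hWd ((le_max_right b 0).trans_lt hβ)
        (hψ β hβb) (hL β hβb)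
  exact Measure.eqOn_open_of_ae_eq ae_zero isOpen_Ioi
    (continuousOn_generatorDefect hν hW hW0 hWd hWd') continuousOn_const hy

theorem integral_comp_sub_min (hW : Monotone W) (hW0 : ∀ w < 0, W w = 0) (u : ℝ) :
    ∫ w in 0..min u y, W (y - w) = (∫ w in 0..y, W w) - ∫ w in 0..y - u, W w := by
  have truncate : ∫ w in 0..y - min u y, W w = ∫ w in 0..y - u, W w := by
    obtain huy | hyu := le_total u y
    · rw [min_eq_left huy]
    · rw [min_eq_right hyu, sub_self, intervalIntegral.integral_same,
        integral_zero_eq_zero_of_nonpos hW0 (sub_nonpos.2 hyu)]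
  rw [intervalIntegral.integral_comp_sub_left W, sub_zero, ← truncate,
    intervalIntegral.integral_interval_sub_left hW.intervalIntegrable hW.intervalIntegrable]

theorem integral_creeping_integrand (hν : IntegrableOn (fun u => min 1 (u ^ 2)) (Ioi 0) ν)
    (hW : Monotone W) (hW0 : ∀ w < 0, W w = 0) {K : NNReal} {t : Set ℝ} (ht : t ∈ 𝓝 y)
    (hK : LipschitzOnWith K W t) {Φ : ℝ} (hΦ : 0 < Φ) :
    ∫ u in Ioi 0, (W y * ((1 - exp (-Φ * u)) / Φ) - ∫ w in 0..min u y, W (y - w)) ∂ν =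
      (∫ u in Ioi 0, jumpKernel W y u ∂ν) - W y / Φ * ∫ u in Ioi 0, compensatedExp Φ u ∂ν := by
  rw [← integral_const_mul, ← integral_sub (integrableOn_jumpKernel hν hW hW0 ht hK)
    ((integrableOn_compensatedExp hν hΦ.le).const_mul _)]
  congr 1 with u
  rw [integral_comp_sub_min hW hW0, jumpKernel, compensatedExp]
  field_simp
  ring

end ScaleFunction

theorem creeping_identity_general
    (c σ q Φ b y : ℝ) (ν : Measure ℝ) (W : ℝ → ℝ) (hΦ : 0 < Φ)
    (hν : ∫⁻ z in Ioi 0, ENNReal.ofReal (min 1 (z ^ 2)) ∂ν < ⊤)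
    (hψΦ : laplaceExponent c σ ν Φ = q)
    (hψ : ∀ β > b, laplaceExponent c σ ν β > q)
    (hW0 : ∀ w < 0, W w = 0)
    (hWc : ContinuousOn W (Ici 0))
    (hWm : MonotoneOn W (Ici 0))
    (hWd : ∀ w ∈ Ioi 0, DifferentiableAt ℝ W w)
    (hWd' : ContinuousOn (deriv W) (Ioi 0))
    (hWLap : ∀ β > b,
      ∫ w in Ioi 0, exp (-β * w) * W w = 1 / (laplaceExponent c σ ν β - q))
    (hy : 0 < y) :
    Zfun q W y - q / Φ * W y -
      (∫ u in Ioi 0, (W y * ((1 - exp (-Φ * u)) / Φ) - ∫ w in 0..min u y, W (y - w)) ∂ν)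
    = σ ^ 2 / 2 * (deriv W y - Φ * W y) := by
  have hν := integrableOn_min_one_sq hν
  have hpos : ∀ β > b, 0 < 1 / (laplaceExponent c σ ν β - q) := fun β hβ =>
    one_div_pos.2 (sub_pos.2 (hψ β hβ))
  have hL : ∀ β > b, HasLaplaceTransform W β (1 / (laplaceExponent c σ ν β - q)) := fun β hβ =>
    hasLaplaceTransform_of_integral_eq (hpos β hβ).ne' (hWLap β hβ)
  have hW := monotone_of_hasLaplaceTransform_nonneg hW0 hWc hWm hWd hL fun β hβ => (hpos β hβ).le
  have generator_eq : 1 + q * (∫ w in 0..y, W w) =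
      c * W y + σ ^ 2 / 2 * deriv W y + ∫ u in Ioi 0, jumpKernel W y u ∂ν :=
    sub_eq_zero.1 (generatorDefect_eq_zero hν hW hW0 hWc hWd hWd' (fun β hβ => (hψ β hβ).ne') hL hy)
  obtain ⟨K, t, ht, hK⟩ := exists_lipschitzOnWith_of_continuousOn_deriv isOpen_Ioi hWd hWd' hy
  rw [integral_creeping_integrand hν hW hW0 ht hK hΦ, Zfun, max_eq_left hy.le, generator_eq, ← hψΦ,
    laplaceExponent_eq]
  field_simp
  ring

/-- for every `y > 0`,
`Z(y) − (q/Φ)W(y) − ∫_{(0,∞)} [W(y)(1 − e^{−Φu})/Φ − ∫_0^{min(u,y)} W(y−w) dw] ν(du)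
  = (σ²/2)(W'(y) − ΦW(y))`. -/
theorem creeping_identity
    (c σ q Φ y : ℝ) (ν : Measure ℝ) (W : ℝ → ℝ)
    (hσ : 0 ≤ σ) (hq : 0 < q) (hΦ : 0 < Φ)
    (hν : ∫⁻ z in Set.Ioi (0:ℝ), ENNReal.ofReal (min 1 (z ^ 2)) ∂ν < ⊤)
    (hψΦ : laplaceExponent c σ ν Φ = q)
    (hψ : ∀ β > Φ, laplaceExponent c σ ν β > q)
    (hW0 : ∀ w < (0:ℝ), W w = 0)
    (hWc : ContinuousOn W (Set.Ici 0))
    (hWm : MonotoneOn W (Set.Ici 0))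
    (hWd : ∀ w ∈ Set.Ioi (0:ℝ), DifferentiableAt ℝ W w)
    (hWd' : ContinuousOn (deriv W) (Set.Ioi 0))
    (hWLap : ∀ β > Φ,
      (∫ w in Set.Ioi (0:ℝ), Real.exp (-β * w) * W w) = 1 / (laplaceExponent c σ ν β - q))
    (hy : 0 < y) :
    Zfun q W y - q / Φ * W y -
      (∫ u in Set.Ioi (0:ℝ),
        (W y * ((1 - Real.exp (-Φ * u)) / Φ) - ∫ w in (0:ℝ)..(min u y), W (y - w)) ∂ν)
    = σ ^ 2 / 2 * (deriv W y - Φ * W y) :=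
  creeping_identity_general c σ q Φ Φ y ν W hΦ hν hψΦ hψ hW0 hWc hWm hWd hWd' hWLap hy
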